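/- (Corollary 1, equation (18)) If u_0^† R u_3 ≠ 0, then exp(j·ε_tx,K)·exp(j·ε_rx,K) = (u_0^† R u_0) / (u_0^† R u_3). -/

import Mathlib

open scoped BigOperators

/-- Steering vector `a(ε) ∈ ℂ^{n+1}` with entries `exp(j·i·ε)`, `i = 0,…,n`. -/
noncomputable def steer (n : ℕ) (ε : ℝ) : Fin (n + 1) → ℂ :=
  fun i => Complex.exp (Complex.I * ((i : ℕ) : ℂ) * (ε : ℂ))

/-- The vector `E(η_1,…,η_m) ∈ ℂ^{m+1}` defined recursively by
`E(η_1) = (1, −exp(j·η_1))` and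
`E(η_1,…,η_p) = (E(η_1,…,η_{p−1}), 0) − exp(j·η_p)·(0, E(η_1,…,η_{p−1}))`
(with base case `E() = (1)`, which reproduces the stated base case at `m = 1`). -/
noncomputable def Evec : (m : ℕ) → (Fin m → ℝ) → (Fin (m + 1) → ℂ)
  | 0, _ => fun _ => 1
  | m + 1, η => fun i =>
      Fin.snoc (α := fun _ => ℂ) (Evec m fun j => η j.castSucc) 0 i -
        Complex.exp (Complex.I * (η (Fin.last m) : ℂ)) *
          Fin.cons (α := fun _ => ℂ) 0 (Evec m fun j => η j.castSucc) i

/-- The cyclic down-shift matrix on `ℂ^{n+1}`: `(Lv)_0 = v_n`, `(Lv)_i = v_{i−1}` for `i ≥ 1`. -/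
def Lmat (n : ℕ) : Matrix (Fin (n + 1)) (Fin (n + 1)) ℂ :=
  Matrix.of fun i l => if l = i - 1 then 1 else 0

/-- Kronecker product of vectors: `(v ⊗ w)_{(i,l)} = v_i · w_l`. -/
def kron {a b : Type*} (v : a → ℂ) (w : b → ℂ) : a × b → ℂ :=
  fun p => v p.1 * w p.2

/-- `x^† y = Σ_i conj(x_i) · y_i`. -/
noncomputable def ip {n : Type*} [Fintype n] (x y : n → ℂ) : ℂ :=
  ∑ i, (starRingEnd ℂ) (x i) * y i

/-- `x^† M y = Σ_{i,l} conj(x_i) · M_{i,l} · y_l`. -/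
noncomputable def qf {n : Type*} [Fintype n] (x : n → ℂ) (M : Matrix n n ℂ) (y : n → ℂ) : ℂ :=
  ∑ i, ∑ l, (starRingEnd ℂ) (x i) * M i l * y l

/-- `E(η_1,…,η_Kp) ∈ ℂ^{Kp+1}` padded with a trailing zero, giving a vector in `ℂ^{Kp+2}`. -/
noncomputable def Epad (Kp : ℕ) (η : Fin Kp → ℝ) : Fin (Kp + 2) → ℂ :=
  Fin.snoc (Evec Kp η) 0

/-- `u_0 = Ẽ_tx ⊗ Ẽ_rx`. -/
noncomputable def u0 (Kp : ℕ) (ηt ηr : Fin Kp → ℝ) : Fin (Kp + 2) × Fin (Kp + 2) → ℂ :=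
  kron (Epad Kp ηt) (Epad Kp ηr)

/-- `u_1 = Ẽ_tx ⊗ (L·Ẽ_rx)`. -/
noncomputable def u1 (Kp : ℕ) (ηt ηr : Fin Kp → ℝ) : Fin (Kp + 2) × Fin (Kp + 2) → ℂ :=
  kron (Epad Kp ηt) ((Lmat (Kp + 1)).mulVec (Epad Kp ηr))

/-- `u_2 = (L·Ẽ_tx) ⊗ Ẽ_rx`. -/
noncomputable def u2 (Kp : ℕ) (ηt ηr : Fin Kp → ℝ) : Fin (Kp + 2) × Fin (Kp + 2) → ℂ :=
  kron ((Lmat (Kp + 1)).mulVec (Epad Kp ηt)) (Epad Kp ηr)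

/-- `u_3 = (L·Ẽ_tx) ⊗ (L·Ẽ_rx)`. -/
noncomputable def u3 (Kp : ℕ) (ηt ηr : Fin Kp → ℝ) : Fin (Kp + 2) × Fin (Kp + 2) → ℂ :=
  kron ((Lmat (Kp + 1)).mulVec (Epad Kp ηt)) ((Lmat (Kp + 1)).mulVec (Epad Kp ηr))

/-- The noiseless auto-correlation matrix `R = Σ_{k=1}^K σ_k² A_k A_k^†`, where
`A_k = a(ε_tx,k) ⊗ a(ε_rx,k)` and `σsq k` is the power `σ_k²`. -/
noncomputable def Rmat (K : ℕ) (εtx εrx σsq : Fin K → ℝ) :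
    Matrix (Fin (K + 1) × Fin (K + 1)) (Fin (K + 1) × Fin (K + 1)) ℂ :=
  Matrix.of fun p q => ∑ k, (σsq k : ℂ) *
    kron (steer K (εtx k)) (steer K (εrx k)) p *
    (starRingEnd ℂ) (kron (steer K (εtx k)) (steer K (εrx k)) q)

/-- The rank-one matrix `R_ε = a(ε) a(ε)^† ∈ ℂ^{(Kp+2)×(Kp+2)}`. -/
noncomputable def Rsingle (Kp : ℕ) (ε : ℝ) : Matrix (Fin (Kp + 2)) (Fin (Kp + 2)) ℂ :=
  Matrix.of fun i l => steer (Kp + 1) ε i * (starRingEnd ℂ) (steer (Kp + 1) ε l)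

/-- The iDEA cost `Q_tx(φ) = (u_1 − exp(j·φ)·u_3)^† R (u_1 − exp(j·φ)·u_3)`. -/
noncomputable def Qcost (Kp : ℕ) (εtx εrx σsq : Fin (Kp + 1) → ℝ)
    (ηt ηr : Fin Kp → ℝ) (φ : ℝ) : ℂ :=
  qf (u1 Kp ηt ηr - Complex.exp (Complex.I * (φ : ℂ)) • u3 Kp ηt ηr)
    (Rmat (Kp + 1) εtx εrx σsq)
    (u1 Kp ηt ηr - Complex.exp (Complex.I * (φ : ℂ)) • u3 Kp ηt ηr)

/-- The closed-form value `4^{2K−1} · Σ_k σ_k² sin²((ε_tx,k − φ)/2) ∏_m sin²((ε_tx,k − ε̂_tx,m)/2)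
∏_n sin²((ε_rx,k − ε̂_rx,n)/2)` (here `K = Kp + 1`, so `2K − 1 = 2·Kp + 1`). -/
noncomputable def Ssum (Kp : ℕ) (εtx εrx σsq : Fin (Kp + 1) → ℝ)
    (ηt ηr : Fin Kp → ℝ) (φ : ℝ) : ℝ :=
  (4 : ℝ) ^ (2 * Kp + 1) * ∑ k, σsq k * Real.sin ((εtx k - φ) / 2) ^ 2 *
    (∏ m, Real.sin ((εtx k - ηt m) / 2) ^ 2) *
    (∏ n, Real.sin ((εrx k - ηr n) / 2) ^ 2)

/-- The `k = K` term of `Ssum`, i.e. the lower bound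
`4^{2K−1} · σ_K² sin²((ε_tx,K − φ)/2) ∏_m sin²((ε_tx,K − ε̂_tx,m)/2) ∏_n sin²((ε_rx,K − ε̂_rx,n)/2)`. -/
noncomputable def Slb (Kp : ℕ) (εtx εrx σsq : Fin (Kp + 1) → ℝ)
    (ηt ηr : Fin Kp → ℝ) (φ : ℝ) : ℝ :=
  (4 : ℝ) ^ (2 * Kp + 1) * σsq (Fin.last Kp) *
    Real.sin ((εtx (Fin.last Kp) - φ) / 2) ^ 2 *
    (∏ m, Real.sin ((εtx (Fin.last Kp) - ηt m) / 2) ^ 2) *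
    (∏ n, Real.sin ((εrx (Fin.last Kp) - ηr n) / 2) ^ 2)

/-- `a(ε)^† v`. -/
noncomputable def sP (n : ℕ) (ε : ℝ) (v : Fin (n + 1) → ℂ) : ℂ :=
  ∑ i, (starRingEnd ℂ) (steer n ε i) * v i

theorem sP_snoc (n : ℕ) (ε : ℝ) (v : Fin (n + 1) → ℂ) :
    sP (n + 1) ε (Fin.snoc (α := fun _ => ℂ) v 0) = sP n ε v := by
  unfold sP
  rw [Fin.sum_univ_castSucc]
  simp [steer]

theorem steer_succ (n : ℕ) (ε : ℝ) (i : Fin (n + 1)) :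
    steer (n + 1) ε i.succ = Complex.exp (Complex.I * (ε : ℂ)) * steer n ε i := by
  unfold steer
  rw [← Complex.exp_add]
  congr 1
  simp only [Fin.val_succ]
  push_cast
  ring

theorem sP_cons (n : ℕ) (ε : ℝ) (v : Fin (n + 1) → ℂ) :
    sP (n + 1) ε (Fin.cons (α := fun _ => ℂ) 0 v) =
      (starRingEnd ℂ) (Complex.exp (Complex.I * (ε : ℂ))) * sP n ε v := by
  unfold sP
  rw [Fin.sum_univ_succ, Finset.mul_sum]
  simp only [Fin.cons_zero, mul_zero, zero_add, Fin.cons_succ, steer_succ, map_mul, mul_assoc]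

theorem exp_conj_mul (ε : ℝ) : Complex.exp (Complex.I * (ε : ℂ)) *
    (starRingEnd ℂ) (Complex.exp (Complex.I * (ε : ℂ))) = 1 := by
  rw [← Complex.exp_conj, ← Complex.exp_add]
  simp

theorem sP_Evec_succ (m : ℕ) (η : Fin (m + 1) → ℝ) (ε : ℝ) :
    sP (m + 1) ε (Evec (m + 1) η) =
      (1 - Complex.exp (Complex.I * (η (Fin.last m) : ℂ)) *
        (starRingEnd ℂ) (Complex.exp (Complex.I * (ε : ℂ)))) *
        sP m ε (Evec m fun j => η j.castSucc) := by
  have h : sP (m + 1) ε (Evec (m + 1) η) =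
      sP (m + 1) ε (Fin.snoc (α := fun _ => ℂ) (Evec m fun j => η j.castSucc) 0) -
      Complex.exp (Complex.I * (η (Fin.last m) : ℂ)) *
      sP (m + 1) ε (Fin.cons (α := fun _ => ℂ) 0 (Evec m fun j => η j.castSucc)) := by
    unfold sP
    rw [Finset.mul_sum, ← Finset.sum_sub_distrib]
    refine Finset.sum_congr rfl fun i _ => ?_
    rw [Evec]
    ring
  rw [h, sP_snoc, sP_cons]
  ring

theorem sP_Evec_zero (m : ℕ) (η : Fin m → ℝ) (k : Fin m) :
    sP m (η k) (Evec m η) = 0 := by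
  induction m with
  | zero => exact k.elim0
  | succ m ih =>
    rw [sP_Evec_succ]
    induction k using Fin.lastCases with
    | last => rw [exp_conj_mul]; ring
    | cast k => rw [ih (fun j => η j.castSucc) k, mul_zero]

theorem L_Epad (Kp : ℕ) (η : Fin Kp → ℝ) :
    (Lmat (Kp + 1)).mulVec (Epad Kp η) = Fin.cons (α := fun _ => ℂ) 0 (Evec Kp η) := by
  funext i
  simp only [Matrix.mulVec, dotProduct, Lmat, Matrix.of_apply, ite_mul, one_mul, zero_mul,
    Finset.sum_ite_eq', Finset.sum_ite_eq, Finset.mem_univ, if_true, Epad]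
  induction i using Fin.cases with
  | zero =>
    have : (0 : Fin (Kp + 2)) - 1 = Fin.last (Kp + 1) := by
      rw [sub_eq_iff_eq_add]; simp
    rw [this]; simp
  | succ i =>
    have : i.succ - 1 = i.castSucc := by
      rw [sub_eq_iff_eq_add]; simp
    rw [this]; simp

theorem sum_kron (n : ℕ) (a b : ℝ) (v w : Fin (n + 1) → ℂ) :
    ∑ p, (starRingEnd ℂ) (kron (steer n a) (steer n b) p) * kron v w p = sP n a v * sP n b w := by
  unfold sP kron
  rw [Fintype.sum_prod_type, Finset.sum_mul_sum]
  refine Finset.sum_congr rfl fun i _ => Finset.sum_congr rfl fun l _ => ?_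
  simp only [map_mul]
  ring

theorem qf_Rmat (K : ℕ) (εtx εrx σsq : Fin K → ℝ) (v w v' w' : Fin (K + 1) → ℂ) :
    qf (kron v w) (Rmat K εtx εrx σsq) (kron v' w') =
      ∑ k, (σsq k : ℂ) * (starRingEnd ℂ) (sP K (εtx k) v * sP K (εrx k) w) *
        (sP K (εtx k) v' * sP K (εrx k) w') := by
  simp only [← sum_kron, map_sum, qf, Rmat, Matrix.of_apply, Finset.mul_sum, Finset.sum_mul]
  conv_rhs => rw [Finset.sum_comm]
  rw [Finset.sum_comm]
  refine Finset.sum_congr rfl fun i _ => ?_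
  rw [Finset.sum_comm]
  refine Finset.sum_congr rfl fun k _ => Finset.sum_congr rfl fun l _ => ?_
  simp only [map_mul, Complex.conj_conj]
  ring

/-- Corollary 1, eq. (18): if u_0^† R u_3 ≠ 0, then
exp(j·ε_tx,K)·exp(j·ε_rx,K) = (u_0^† R u_0) / (u_0^† R u_3). -/
theorem statement11 (Kp : ℕ) (hKp : 1 ≤ Kp) (εtx εrx : Fin (Kp + 1) → ℝ)
    (σsq : Fin (Kp + 1) → ℝ) (hσ : ∀ k, 0 < σsq k)
    (hden : qf (u0 Kp (fun i => εtx i.castSucc) (fun i => εrx i.castSucc)) (Rmat (Kp + 1) εtx εrx σsq)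
        (u3 Kp (fun i => εtx i.castSucc) (fun i => εrx i.castSucc)) ≠ 0) :
    Complex.exp (Complex.I * (εtx (Fin.last Kp) : ℂ)) * Complex.exp (Complex.I * (εrx (Fin.last Kp) : ℂ)) =
      qf (u0 Kp (fun i => εtx i.castSucc) (fun i => εrx i.castSucc)) (Rmat (Kp + 1) εtx εrx σsq)
          (u0 Kp (fun i => εtx i.castSucc) (fun i => εrx i.castSucc)) /
        qf (u0 Kp (fun i => εtx i.castSucc) (fun i => εrx i.castSucc)) (Rmat (Kp + 1) εtx εrx σsq)
          (u3 Kp (fun i => εtx i.castSucc) (fun i => εrx i.castSucc)) := by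
  rw [eq_div_iff hden]
  simp only [u0, u3, qf_Rmat, L_Epad, sP_cons]
  simp only [Epad, sP_snoc]
  rw [Fin.sum_univ_castSucc, Fin.sum_univ_castSucc]
  have h (ε : Fin (Kp + 1) → ℝ) (k : Fin Kp) :
      sP Kp (ε k.castSucc) (Evec Kp fun i => ε i.castSucc) = 0 :=
    sP_Evec_zero Kp (fun i => ε i.castSucc) k
  simp only [h, mul_zero, zero_mul, Finset.sum_const_zero, zero_add]
  have h1 := exp_conj_mul (εtx (Fin.last Kp))
  have h2 := exp_conj_mul (εrx (Fin.last Kp))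
  generalize (starRingEnd ℂ) (Complex.exp (Complex.I * (εtx (Fin.last Kp) : ℂ))) = c1 at *
  generalize (starRingEnd ℂ) (Complex.exp (Complex.I * (εrx (Fin.last Kp) : ℂ))) = c2 at *
  generalize Complex.exp (Complex.I * (εtx (Fin.last Kp) : ℂ)) = e1 at *
  generalize Complex.exp (Complex.I * (εrx (Fin.last Kp) : ℂ)) = e2 at *
  generalize sP Kp (εtx (Fin.last Kp)) (Evec Kp fun i => εtx i.castSucc) = p
  generalize sP Kp (εrx (Fin.last Kp)) (Evec Kp fun i => εrx i.castSucc) = q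
  generalize (σsq (Fin.last Kp) : ℂ) * (starRingEnd ℂ) (p * q) = s
  linear_combination (s * p * q * e2 * c2) * h1 + s * p * q * h2
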